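/- arXiv:1108.5930 — 2 statements merged into one kernel-verified Lean document; each statement's English description precedes it below -/
import Mathlib

section
/- Let L be an infeasible linear pencil in n variables. Then −1 ∈ M_L^(2ⁿ−1), i.e., there exist polynomials pᵢ ∈ ℝ[X₁,…,Xₙ] of degree at most 2ⁿ−1 and vectors of polynomials vⱼ ∈ ℝ[X₁,…,Xₙ]ᵐ with all entries of degree at most 2ⁿ−1 such that −1 = Σᵢ pᵢ² + Σⱼ vⱼᵀ L vⱼ. -/
open MvPolynomial Matrix

/-- The linear pencil `L = A 0 + X 1 * A 1 + ... + X n * A n` as a symmetric matrix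
with entries in the polynomial ring `ℝ[X 1, ..., X n]`. -/
noncomputable def pencilPoly {n m : ℕ} (A : Fin (n+1) → Matrix (Fin m) (Fin m) ℝ) :
    Matrix (Fin m) (Fin m) (MvPolynomial (Fin n) ℝ) :=
  fun a b => MvPolynomial.C (A 0 a b) + ∑ i : Fin n, MvPolynomial.X i * MvPolynomial.C (A i.succ a b)

/-- Evaluation of the pencil at a point `x ∈ ℝⁿ`. -/
def pencilEval {n m : ℕ} (A : Fin (n+1) → Matrix (Fin m) (Fin m) ℝ) (x : Fin n → ℝ) :
    Matrix (Fin m) (Fin m) ℝ :=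
  A 0 + ∑ i : Fin n, x i • A i.succ

/-- The spectrahedron `S_L = {x ∈ ℝⁿ ∣ L(x) ⪰ 0}`. -/
def specSet {n m : ℕ} (A : Fin (n+1) → Matrix (Fin m) (Fin m) ℝ) : Set (Fin n → ℝ) :=
  {x | (pencilEval A x).PosSemidef}

/-- `vᵀ L v` for a vector `v` of polynomials. -/
noncomputable def vLv {n m : ℕ} (A : Fin (n+1) → Matrix (Fin m) (Fin m) ℝ)
    (v : Fin m → MvPolynomial (Fin n) ℝ) : MvPolynomial (Fin n) ℝ :=
  ∑ a : Fin m, ∑ b : Fin m, v a * pencilPoly A a b * v b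

/-- Membership in the quadratic module `M_L` associated to the pencil `L`:
`p = s + Σⱼ vⱼᵀ L vⱼ` with `s` a sum of squares. -/
def memQM {n m : ℕ} (A : Fin (n+1) → Matrix (Fin m) (Fin m) ℝ)
    (p : MvPolynomial (Fin n) ℝ) : Prop :=
  ∃ (k r : ℕ) (q : Fin k → MvPolynomial (Fin n) ℝ)
    (v : Fin r → Fin m → MvPolynomial (Fin n) ℝ),
    p = ∑ i, (q i)^2 + ∑ j, vLv A (v j)

/-- Membership in the truncated quadratic module `M_L^(k)` associated to `L`:
`p = Σᵢ pᵢ² + Σⱼ vⱼᵀ L vⱼ` where the `pᵢ` and all entries of the `vⱼ` have degree `≤ k`. -/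
def memQMdeg {n m : ℕ} (A : Fin (n+1) → Matrix (Fin m) (Fin m) ℝ) (k : ℕ)
    (p : MvPolynomial (Fin n) ℝ) : Prop :=
  ∃ (k₁ k₂ : ℕ) (q : Fin k₁ → MvPolynomial (Fin n) ℝ)
    (v : Fin k₂ → Fin m → MvPolynomial (Fin n) ℝ),
    (∀ i, (q i).totalDegree ≤ k) ∧ (∀ j a, (v j a).totalDegree ≤ k) ∧
    p = ∑ i, (q i)^2 + ∑ j, vLv A (v j)

/-- In finite dimension the convex hull of a compact set is compact. -/
lemma IsCompact.convexHull_of_finiteDimensional {E : Type*} [AddCommGroup E] [Module ℝ E]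
    [TopologicalSpace E] [ContinuousAdd E] [ContinuousSMul ℝ E] [FiniteDimensional ℝ E]
    {s : Set E} (hs : IsCompact s) : IsCompact (convexHull ℝ s) := by
  let ι := Fin (Module.finrank ℝ E + 1)
  let f : (ι → ℝ) × (ι → E) → E := fun p => ∑ i, p.1 i • p.2 i
  have hf : Continuous f := by fun_prop
  suffices h : convexHull ℝ s = f '' (stdSimplex ℝ ι ×ˢ Set.univ.pi fun _ => s) by
    rw [h]
    exact ((isCompact_stdSimplex ℝ ι).prod (isCompact_univ_pi fun _ => hs)).image hf
  ext x
  constructor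
  · intro hx
    obtain ⟨κ, _, z, w, hz, hind, hw, hw1, rfl⟩ := eq_pos_convex_span_of_mem_convexHull hx
    have hcard : Fintype.card κ ≤ Fintype.card ι := by
      rw [Fintype.card_fin]
      exact hind.card_le_finrank_succ.trans (Nat.succ_le_succ (Submodule.finrank_le _))
    obtain ⟨e⟩ := Function.Embedding.nonempty_of_card_le hcard
    obtain ⟨k₀, -⟩ : ∃ k ∈ Finset.univ, w k ≠ 0 :=
      Finset.exists_ne_zero_of_sum_ne_zero (hw1 ▸ one_ne_zero)
    have hext : ∀ i ∉ Set.range e, Function.extend e w 0 i = 0 := fun i hi =>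
      Function.extend_apply' _ _ _ hi
    refine ⟨(Function.extend e w 0, Function.extend e z fun _ => z k₀), ⟨⟨fun i => ?_, ?_⟩, ?_⟩, ?_⟩
    · by_cases hi : i ∈ Set.range e
      · obtain ⟨k, rfl⟩ := hi
        simpa [e.injective.extend_apply] using (hw k).le
      · exact (hext i hi).ge
    · rw [← hw1]
      exact (Fintype.sum_of_injective e e.injective _ _ hext fun k =>
        (e.injective.extend_apply w 0 k).symm).symm
    · intro i _
      by_cases hi : i ∈ Set.range e
      · obtain ⟨k, rfl⟩ := hi
        simpa [e.injective.extend_apply] using hz ⟨k, rfl⟩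
      · simpa [Function.extend_apply' _ _ _ hi] using hz ⟨k₀, rfl⟩
    · refine (Fintype.sum_of_injective e e.injective _ _ (fun i hi => ?_) fun k => ?_).symm
      · simp [hext i hi]
      · simp [e.injective.extend_apply]
  · rintro ⟨⟨w, z⟩, ⟨hw, hz⟩, rfl⟩
    exact (convex_convexHull ℝ s).sum_mem (fun i _ => hw.1 i) hw.2
      fun i _ => subset_convexHull ℝ s (hz i trivial)

section TruncatedQuadraticModule

variable {n m : ℕ} {A : Fin (n+1) → Matrix (Fin m) (Fin m) ℝ}

/-- The affine linear polynomial with coefficient vector `z`. -/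
noncomputable def affPoly {n : ℕ} : (Fin (n+1) → ℝ) →ₗ[ℝ] MvPolynomial (Fin n) ℝ where
  toFun z := C (z 0) + ∑ i : Fin n, X i * C (z i.succ)
  map_add' y z := by
    simp only [Pi.add_apply, C_add, mul_add, Finset.sum_add_distrib]
    ring
  map_smul' c z := by
    simp only [Pi.smul_apply, smul_eq_mul, C_mul, RingHom.id_apply, smul_eq_C_mul, mul_add,
      Finset.mul_sum]
    congr 1
    exact Finset.sum_congr rfl fun i _ => by ring

lemma affPoly_apply (z : Fin (n+1) → ℝ) :
    affPoly z = C (z 0) + ∑ i : Fin n, X i * C (z i.succ) := rfl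

lemma affPoly_single_zero : affPoly (Pi.single 0 1 : Fin (n+1) → ℝ) = 1 := by
  simp [affPoly_apply]

lemma totalDegree_affPoly_le (z : Fin (n+1) → ℝ) : (affPoly z).totalDegree ≤ 1 := by
  rw [affPoly_apply]
  refine (totalDegree_add _ _).trans (max_le (by simp) ?_)
  refine totalDegree_finsetSum_le fun i _ => (totalDegree_mul _ _).trans ?_
  simp

lemma pencilPoly_apply (a b : Fin m) : pencilPoly A a b = affPoly fun i => A i a b := rfl

lemma vLv_eq_dotProduct (v : Fin m → MvPolynomial (Fin n) ℝ) :
    vLv A v = v ⬝ᵥ pencilPoly A *ᵥ v := by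
  simp only [vLv, dotProduct, mulVec, Finset.mul_sum, mul_assoc]

lemma pencilPoly_mulVec_C (u : Fin m → ℝ) (a : Fin m) :
    (pencilPoly A *ᵥ fun b => C (u b)) a = affPoly fun i => (A i *ᵥ u) a := by
  have : (fun i => (A i *ᵥ u) a) = ∑ b, u b • fun i => A i a b := by
    ext i
    simp [mulVec, dotProduct, mul_comm]
  rw [this, map_sum]
  simp only [map_smul, smul_eq_C_mul, mulVec, dotProduct, pencilPoly_apply, mul_comm]

lemma vLv_C (u : Fin m → ℝ) :
    vLv A (fun b => C (u b)) = affPoly fun i => u ⬝ᵥ A i *ᵥ u := by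
  have : (fun i => u ⬝ᵥ A i *ᵥ u) = ∑ a, u a • fun i => (A i *ᵥ u) a := by
    ext i
    simp [dotProduct]
  rw [this, map_sum, vLv_eq_dotProduct]
  simp only [map_smul, smul_eq_C_mul, dotProduct, pencilPoly_mulVec_C]

lemma vLv_mul (r : MvPolynomial (Fin n) ℝ) (v : Fin m → MvPolynomial (Fin n) ℝ) :
    vLv A (fun a => r * v a) = r ^ 2 * vLv A v := by
  simp only [vLv, Finset.mul_sum]
  exact Finset.sum_congr rfl fun a _ => Finset.sum_congr rfl fun b _ => by ring

lemma pencilPoly_isSymm (hsymm : ∀ i, (A i).IsSymm) : (pencilPoly A).IsSymm := by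
  ext a b
  simp only [transpose_apply, pencilPoly_apply, (hsymm _).apply]

namespace memQMdeg

variable {k l : ℕ} {p q : MvPolynomial (Fin n) ℝ}

lemma mono (h : memQMdeg A k p) (hkl : k ≤ l) : memQMdeg A l p := by
  obtain ⟨k₁, k₂, r, v, hr, hv, rfl⟩ := h
  exact ⟨k₁, k₂, r, v, fun i => (hr i).trans hkl, fun j a => (hv j a).trans hkl, rfl⟩

lemma add (hp : memQMdeg A k p) (hq : memQMdeg A k q) : memQMdeg A k (p + q) := by
  obtain ⟨k₁, k₂, r, v, hr, hv, rfl⟩ := hp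
  obtain ⟨l₁, l₂, s, w, hs, hw, rfl⟩ := hq
  refine ⟨k₁ + l₁, k₂ + l₂, Fin.append r s, Fin.append v w, ?_, ?_, ?_⟩
  · exact fun i => Fin.addCases (by simpa using hr) (by simpa using hs) i
  · exact fun j => Fin.addCases (by simpa using hv) (by simpa using hw) j
  · simp only [Fin.sum_univ_add, Fin.append_left, Fin.append_right]
    ring

lemma zero : memQMdeg A k 0 :=
  ⟨0, 0, Fin.elim0, Fin.elim0, fun i => i.elim0, fun j => j.elim0, by simp⟩

lemma sum {ι : Type*} {s : Finset ι} {f : ι → MvPolynomial (Fin n) ℝ}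
    (h : ∀ i ∈ s, memQMdeg A k (f i)) : memQMdeg A k (∑ i ∈ s, f i) :=
  Finset.sum_induction f (memQMdeg A k) (fun _ _ => add) zero h

lemma sq (hp : p.totalDegree ≤ k) : memQMdeg A k (p ^ 2) :=
  ⟨1, 0, fun _ => p, Fin.elim0, fun _ => hp, fun j => j.elim0, by simp⟩

lemma of_vLv {v : Fin m → MvPolynomial (Fin n) ℝ} (hv : ∀ a, (v a).totalDegree ≤ k) :
    memQMdeg A k (vLv A v) :=
  ⟨0, 1, Fin.elim0, fun _ => v, fun i => i.elim0, fun _ => hv, by simp⟩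

lemma sq_mul (hp : memQMdeg A k p) (hq : q.totalDegree ≤ l) :
    memQMdeg A (l + k) (q ^ 2 * p) := by
  obtain ⟨k₁, k₂, r, v, hr, hv, rfl⟩ := hp
  refine ⟨k₁, k₂, fun i => q * r i, fun j a => q * v j a, fun i => ?_, fun j a => ?_, ?_⟩
  · exact (totalDegree_mul _ _).trans (add_le_add hq (hr i))
  · exact (totalDegree_mul _ _).trans (add_le_add hq (hv j a))
  · simp only [vLv_mul, mul_pow, mul_add, Finset.mul_sum]

lemma smul (hp : memQMdeg A k p) {c : ℝ} (hc : 0 ≤ c) : memQMdeg A k (c • p) := by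
  have := hp.sq_mul (q := C √c) (l := 0) (by simp)
  rwa [← C_pow, Real.sq_sqrt hc, zero_add, ← smul_eq_C_mul] at this

/-- If `p` and `-p` both lie in the module, so does `-p²`, in a higher truncation. -/
lemma neg_sq (hp : memQMdeg A k p) (hn : memQMdeg A k (-p)) (hd : p.totalDegree ≤ l) :
    memQMdeg A (l + k) (-p ^ 2) := by
  have h₁ := hp.sq_mul (q := 1 - p) (l := l)
    ((totalDegree_sub _ _).trans (max_le (by simp) hd))
  have h₂ := hn.sq_mul (q := 1 + p) (l := l)
    ((totalDegree_add _ _).trans (max_le (by simp) hd))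
  convert (h₁.add h₂).smul (c := 1 / 4) (by norm_num) using 1
  have : (1 - p) ^ 2 * p + (1 + p) ^ 2 * -p = (4 : ℝ) • -p ^ 2 := by
    rw [smul_eq_C_mul, map_ofNat]
    ring
  rw [this, smul_smul]
  norm_num

end memQMdeg

/-- A vector `u` isotropic for the pencil yields `-ℓ²` for every entry `ℓ` of `L u`. -/
lemma memQMdeg_neg_sq_of_isotropic (hsymm : ∀ i, (A i).IsSymm) {u : Fin m → ℝ}
    (hu : ∀ i, u ⬝ᵥ A i *ᵥ u = 0) (a : Fin m) :
    memQMdeg A 1 (-(affPoly fun i => (A i *ᵥ u) a) ^ 2) := by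
  set ℓ : MvPolynomial (Fin n) ℝ := affPoly fun i => (A i *ᵥ u) a
  set d : MvPolynomial (Fin n) ℝ := pencilPoly A a a with hd
  set s : MvPolynomial (Fin n) ℝ := C (-1 / 2) * (d + 1) with hs
  set U : Fin m → MvPolynomial (Fin n) ℝ := fun b => C (u b) with hU
  have hLU : (pencilPoly A *ᵥ U) a = ℓ := pencilPoly_mulVec_C u a
  have hUU : U ⬝ᵥ pencilPoly A *ᵥ U = 0 := by
    rw [← vLv_eq_dotProduct, hU, vLv_C]
    simp only [hu]
    exact map_zero affPoly
  have hUL : (U ᵥ* pencilPoly A) a = ℓ := by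
    rw [← hLU, ← vecMul_transpose, (pencilPoly_isSymm hsymm).eq]
  have hdeg : s.totalDegree ≤ 1 := by
    refine (totalDegree_mul _ _).trans ?_
    rw [totalDegree_C, zero_add]
    exact (totalDegree_add _ _).trans (max_le (hd ▸ totalDegree_affPoly_le fun i => A i a a) (by simp))
  have hval : vLv A (s • U + Pi.single a ℓ) = -ℓ ^ 2 := by
    have key : vLv A (s • U + Pi.single a ℓ) = 2 * s * ℓ ^ 2 + ℓ ^ 2 * d := by
      rw [vLv_eq_dotProduct, mulVec_add, dotProduct_add, add_dotProduct, add_dotProduct,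
        mulVec_smul, dotProduct_smul, dotProduct_smul, smul_dotProduct, hUU,
        smul_dotProduct, dotProduct_mulVec U, dotProduct_single, hUL, single_dotProduct, hLU,
        single_dotProduct, mulVec_single]
      simp only [smul_eq_mul, Pi.smul_apply, MulOpposite.smul_eq_mul_unop, MulOpposite.unop_op,
        Matrix.col_apply, ← hd]
      ring
    have h2 : (2 : MvPolynomial (Fin n) ℝ) * C (-1 / 2) = -1 := by
      rw [← map_ofNat C 2, ← C_mul]
      norm_num
    rw [key, hs, ← mul_assoc 2, h2]
    ring
  rw [← hval]
  refine memQMdeg.of_vLv fun b => ?_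
  refine (totalDegree_add _ _).trans (max_le ?_ ?_)
  · refine (totalDegree_mul _ _).trans ?_
    simpa [hU] using hdeg
  · by_cases hb : b = a
    · subst hb
      simpa using totalDegree_affPoly_le _
    · simp [hb]

lemma dotProduct_pencilEval (x : Fin n → ℝ) (u : Fin m → ℝ) :
    u ⬝ᵥ pencilEval A x *ᵥ u = u ⬝ᵥ A 0 *ᵥ u + ∑ i, x i * (u ⬝ᵥ A i.succ *ᵥ u) := by
  simp only [pencilEval, add_mulVec, dotProduct_add, sum_mulVec, dotProduct_sum, smul_mulVec,
    dotProduct_smul, smul_eq_mul]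

lemma pencilEval_isHermitian (hsymm : ∀ i, (A i).IsSymm) (x : Fin n → ℝ) :
    (pencilEval A x).IsHermitian := by
  have : (pencilEval A x).IsSymm := by
    ext a b
    simp [pencilEval, Matrix.sum_apply, (hsymm _).apply]
  rwa [IsHermitian, conjTranspose_eq_transpose_of_trivial]

lemma mem_specSet_iff (hsymm : ∀ i, (A i).IsSymm) (x : Fin n → ℝ) :
    x ∈ specSet A ↔ ∀ u : Fin m → ℝ, 0 ≤ u ⬝ᵥ pencilEval A x *ᵥ u := by
  rw [specSet, Set.mem_ofPred_eq, posSemidef_iff_dotProduct_mulVec,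
    and_iff_right (pencilEval_isHermitian hsymm x)]
  simp only [star_trivial]

/-- The vectors annihilated by every coefficient matrix of the pencil. -/
def pencilKer (A : Fin (n+1) → Matrix (Fin m) (Fin m) ℝ) : Submodule ℝ (Fin m → ℝ) :=
  ⨅ i, LinearMap.ker (A i).mulVecLin

lemma mem_pencilKer {u : Fin m → ℝ} : u ∈ pencilKer A ↔ ∀ i, A i *ᵥ u = 0 := by
  simp [pencilKer]

lemma quadForm_add_of_mem_pencilKer (hsymm : ∀ i, (A i).IsSymm) {u : Fin m → ℝ}
    (hu : u ∈ pencilKer A) (w : Fin m → ℝ) (i : Fin (n+1)) :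
    (u + w) ⬝ᵥ A i *ᵥ (u + w) = w ⬝ᵥ A i *ᵥ w := by
  have h := mem_pencilKer.1 hu i
  have h' : u ᵥ* A i = 0 := by rw [← (hsymm i).eq, vecMul_transpose, h]
  rw [mulVec_add, h, zero_add, add_dotProduct, dotProduct_mulVec u, h', zero_dotProduct, zero_add]

/-- For an infeasible pencil, the coefficient vectors of `1` and of the `uᵀ L u`, with `u` on the
unit sphere of a complement of the common kernel, have `0` in their convex hull. -/
lemma zero_mem_convexHull_of_infeasible (hsymm : ∀ i, (A i).IsSymm) (hinf : specSet A = ∅)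
    {W : Submodule ℝ (Fin m → ℝ)} (hW : IsCompl (pencilKer A) W) :
    (0 : Fin (n+1) → ℝ) ∈ convexHull ℝ (insert (Pi.single 0 1)
      ((fun (u : Fin m → ℝ) i => u ⬝ᵥ A i *ᵥ u) '' ((W : Set _) ∩ Metric.sphere 0 1))) := by
  set s : Set (Fin (n+1) → ℝ) := insert (Pi.single 0 1)
      ((fun (u : Fin m → ℝ) i => u ⬝ᵥ A i *ᵥ u) '' ((W : Set _) ∩ Metric.sphere 0 1))
  have hcomp : IsCompact s := by
    refine IsCompact.insert (IsCompact.image ?_ ?_) _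
    · exact (isCompact_sphere _ _).inter_left W.closed_of_finiteDimensional
    · simp only [dotProduct, mulVec]
      fun_prop
  by_contra h0
  obtain ⟨φ, c, hc, hφ⟩ := geometric_hahn_banach_point_closed (convex_convexHull ℝ s)
    hcomp.convexHull_of_finiteDimensional.isClosed h0
  rw [map_zero] at hc
  have hpos : ∀ z ∈ s, 0 < φ z := fun z hz => hc.trans (hφ z (subset_convexHull ℝ s hz))
  have hφsum : ∀ z : Fin (n+1) → ℝ, φ z = ∑ i, z i * φ (Pi.single i 1) := fun z => by
    conv_lhs => rw [pi_eq_sum_univ' z, map_sum]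
    refine Finset.sum_congr rfl fun i _ => ?_
    rw [map_smul, smul_eq_mul]
  have hone : 0 < φ (Pi.single 0 1) := hpos _ (Set.mem_insert _ _)
  have hnonneg : ∀ w ∈ W, 0 ≤ φ fun i => w ⬝ᵥ A i *ᵥ w := by
    intro w hw
    rcases eq_or_ne w 0 with rfl | hw0
    · simp only [zero_dotProduct]
      exact (map_zero φ).ge
    · have hn : 0 < ‖w‖ := norm_pos_iff.2 hw0
      have h := hpos _ (Set.mem_insert_of_mem _ ⟨‖w‖⁻¹ • w, ⟨W.smul_mem _ hw, by
        simp [norm_smul, hn.ne']⟩, rfl⟩)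
      have e : (fun i => w ⬝ᵥ A i *ᵥ w) =
          (‖w‖ ^ 2) • fun i => (‖w‖⁻¹ • w) ⬝ᵥ A i *ᵥ (‖w‖⁻¹ • w) := by
        ext i
        simp only [Pi.smul_apply, mulVec_smul, dotProduct_smul, smul_dotProduct, smul_eq_mul]
        field_simp
      rw [e, map_smul]
      exact mul_nonneg (sq_nonneg _) h.le
  have hmem : (fun i : Fin n => φ (Pi.single i.succ 1) / φ (Pi.single 0 1)) ∈ specSet A := by
    rw [mem_specSet_iff hsymm]
    intro x
    obtain ⟨u, hu, w, hw, rfl⟩ := Submodule.mem_sup.1 (hW.sup_eq_top ▸ Submodule.mem_top (x := x))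
    rw [dotProduct_pencilEval]
    simp only [quadForm_add_of_mem_pencilKer hsymm hu]
    have h := hnonneg w hw
    rw [hφsum, Fin.sum_univ_succ] at h
    refine (div_nonneg h hone.le).trans_eq ?_
    rw [add_div, mul_div_cancel_right₀ _ hone.ne', Finset.sum_div]
    congr 1
    exact Finset.sum_congr rfl fun i _ => by ring
  rw [hinf] at hmem
  exact hmem

/-- An infeasible pencil admits a nonzero affine linear polynomial `ℓ` with `-ℓ² ∈ M_L^(1)`. -/
lemma exists_memQMdeg_neg_affPoly_sq (hsymm : ∀ i, (A i).IsSymm) (hinf : specSet A = ∅) :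
    ∃ z : Fin (n+1) → ℝ, z ≠ 0 ∧ memQMdeg A 1 (-(affPoly z) ^ 2) := by
  obtain ⟨W, hW⟩ := (pencilKer A).exists_isCompl
  classical
  have h0 := zero_mem_convexHull_of_infeasible hsymm hinf hW
  rw [_root_.convexHull_eq] at h0
  obtain ⟨ι, t, w, z, hw, hw1, hz, hsum⟩ := h0
  rw [Finset.centerMass_eq_of_sum_1 _ _ hw1] at hsum
  have hmem : ∀ i ∈ t, memQMdeg A 0 (affPoly (z i)) := by
    intro i hi
    rcases hz i hi with h | ⟨u, -, h⟩
    · rw [h, affPoly_single_zero]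
      simpa using memQMdeg.sq (A := A) (p := 1) (k := 0) (by simp)
    · rw [← h, ← vLv_C]
      exact memQMdeg.of_vLv (by simp)
  obtain ⟨i, hi, hwi⟩ : ∃ i ∈ t, w i ≠ 0 := Finset.exists_ne_zero_of_sum_ne_zero (hw1 ▸ one_ne_zero)
  have hwpos : 0 < w i := (hw i hi).lt_of_ne' hwi
  by_cases hzi : z i = 0
  · rcases hz i hi with h | ⟨u, ⟨huW, hu1⟩, h⟩
    · rw [hzi] at h
      simpa using congrFun h 0
    · rw [hzi] at h
      have hu0 : u ≠ 0 := ne_zero_of_mem_unit_sphere ⟨u, hu1⟩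
      have hker : u ∉ pencilKer A := fun hu =>
        hu0 (Submodule.disjoint_def.1 hW.disjoint u hu huW)
      rw [mem_pencilKer, not_forall] at hker
      obtain ⟨j, hj⟩ := hker
      obtain ⟨a, ha⟩ := Function.ne_iff.1 hj
      exact ⟨fun i => (A i *ᵥ u) a, fun he => ha (congrFun he j),
        memQMdeg_neg_sq_of_isotropic hsymm (fun i => congrFun h i) a⟩
  · refine ⟨z i, hzi, (hmem i hi).neg_sq ?_ (totalDegree_affPoly_le _)⟩
    have hneg : -z i = (w i)⁻¹ • ∑ j ∈ t.erase i, w j • z j := by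
      rw [← Finset.add_sum_erase _ _ hi] at hsum
      rw [eq_neg_of_add_eq_zero_right hsum, smul_neg, smul_smul, inv_mul_cancel₀ hwi, one_smul]
    rw [← map_neg, hneg, map_smul, map_sum]
    refine (memQMdeg.sum fun j hj => ?_).smul (inv_nonneg.2 hwpos.le)
    rw [map_smul]
    exact (hmem j (Finset.mem_of_mem_erase hj)).smul (hw j (Finset.mem_of_mem_erase hj))

end TruncatedQuadraticModule

section Elimination

variable {n m : ℕ}

/-- The restriction of a pencil to the hyperplane `affPoly z = 0`, eliminating the variable `j`. -/
noncomputable def restrictPencil (A : Fin (n+2) → Matrix (Fin m) (Fin m) ℝ) (z : Fin (n+2) → ℝ)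
    (j : Fin (n+1)) (i : Fin (n+1)) : Matrix (Fin m) (Fin m) ℝ :=
  A (j.succ.succAbove i) - (z (j.succ.succAbove i) / z j.succ) • A j.succ

variable {A : Fin (n+2) → Matrix (Fin m) (Fin m) ℝ} {z : Fin (n+2) → ℝ} {j : Fin (n+1)}

lemma restrictPencil_isSymm (hsymm : ∀ i, (A i).IsSymm) (i : Fin (n+1)) :
    (restrictPencil A z j i).IsSymm :=
  (hsymm _).sub ((hsymm _).smul _)

lemma specSet_restrictPencil_eq_empty (hinf : specSet A = ∅) :
    specSet (restrictPencil A z j) = ∅ := by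
  rw [Set.eq_empty_iff_forall_notMem] at hinf ⊢
  intro y hy
  apply hinf (j.insertNth
    (-(z 0 / z j.succ + ∑ i, y i * (z (j.succAbove i).succ / z j.succ))) y)
  rw [specSet, Set.mem_ofPred_eq] at hy ⊢
  convert hy using 1
  simp only [pencilEval, restrictPencil, Fin.sum_univ_succAbove _ j, Fin.insertNth_apply_same,
    Fin.insertNth_apply_succAbove, Fin.succ_succAbove_zero, Fin.succ_succAbove_succ, smul_sub,
    Finset.sum_sub_distrib, neg_smul, add_smul, Finset.sum_smul, smul_smul]
  abel

lemma rename_pencilPoly_restrictPencil (hz : z j.succ ≠ 0) (a b : Fin m) :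
    rename j.succAbove (pencilPoly (restrictPencil A z j) a b) =
      pencilPoly A a b - affPoly z * C (A j.succ a b / z j.succ) := by
  have hX : (X j : MvPolynomial (Fin (n+1)) ℝ) * C (A j.succ a b) =
      X j * C (z j.succ) * C (A j.succ a b / z j.succ) := by
    rw [mul_assoc, ← C_mul, mul_div_cancel₀ _ hz]
  have hC : ∀ i, C (σ := Fin (n+1)) (z i / z j.succ * A j.succ a b) =
      C (z i) * C (A j.succ a b / z j.succ) := fun i => by
    rw [← C_mul]
    ring_nf
  simp only [pencilPoly, affPoly_apply, restrictPencil, Fin.sum_univ_succAbove _ j, hX,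
    Fin.succ_succAbove_zero, Fin.succ_succAbove_succ, map_add, map_sub, map_sum, map_mul, rename_X,
    rename_C, Matrix.sub_apply, Matrix.smul_apply, smul_eq_mul, mul_sub,
    Finset.sum_sub_distrib, add_mul, Finset.sum_mul, ← mul_assoc]
  simp only [← C_mul, hC, mul_assoc]
  ring

lemma exists_rename_vLv_restrictPencil (hz : z j.succ ≠ 0) {k : ℕ}
    {v : Fin m → MvPolynomial (Fin n) ℝ} (hv : ∀ a, (v a).totalDegree ≤ k) :
    ∃ r : MvPolynomial (Fin (n+1)) ℝ, r.totalDegree ≤ k + k ∧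
      rename j.succAbove (vLv (restrictPencil A z j) v) =
        vLv A (fun a => rename j.succAbove (v a)) - affPoly z * r := by
  have hdeg : ∀ a, (rename j.succAbove (v a)).totalDegree ≤ k := fun a =>
    (totalDegree_rename_le _ _).trans (hv a)
  refine ⟨∑ a, ∑ b, rename j.succAbove (v a) * C (A j.succ a b / z j.succ) *
    rename j.succAbove (v b), ?_, ?_⟩
  · refine totalDegree_finsetSum_le fun a _ => totalDegree_finsetSum_le fun b _ => ?_
    refine (totalDegree_mul _ _).trans (add_le_add ((totalDegree_mul _ _).trans ?_) (hdeg b))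
    simpa using hdeg a
  · simp only [vLv, map_sum, map_mul, rename_pencilPoly_restrictPencil hz, Finset.mul_sum,
      ← Finset.sum_sub_distrib]
    exact Finset.sum_congr rfl fun a _ => Finset.sum_congr rfl fun b _ => by ring

/-- A certificate for the restriction to `ℓ = 0` lifts to the pencil modulo a multiple of `ℓ`. -/
lemma exists_memQMdeg_rename_add (hz : z j.succ ≠ 0) {k : ℕ} {p : MvPolynomial (Fin n) ℝ}
    (hp : memQMdeg (restrictPencil A z j) k p) :
    ∃ r : MvPolynomial (Fin (n+1)) ℝ, r.totalDegree ≤ k + k ∧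
      memQMdeg A k (rename j.succAbove p + affPoly z * r) := by
  obtain ⟨k₁, k₂, q, v, hq, hv, rfl⟩ := hp
  choose r hr hrv using fun i => exists_rename_vLv_restrictPencil (A := A) hz (hv i)
  refine ⟨∑ i, r i, totalDegree_finsetSum_le fun i _ => hr i, k₁, k₂,
    fun i => rename j.succAbove (q i), fun i a => rename j.succAbove (v i a),
    fun i => (totalDegree_rename_le _ _).trans (hq i),
    fun i a => (totalDegree_rename_le _ _).trans (hv i a), ?_⟩
  simp only [map_add, map_sum, map_pow, hrv, Finset.sum_sub_distrib, Finset.mul_sum]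
  ring

/-- If `-1 + ℓ r` and `-ℓ²` are certified, then so is `-1`. -/
lemma memQMdeg_neg_one_of_lift {k : ℕ} {ℓ r : MvPolynomial (Fin (n+1)) ℝ}
    (hℓ : ℓ.totalDegree ≤ 1) (hr : r.totalDegree ≤ k + k)
    (hlift : memQMdeg A k (-1 + ℓ * r)) (hsq : memQMdeg A 1 (-ℓ ^ 2)) :
    memQMdeg A (k + k + 1) (-1) := by
  have h₁ : memQMdeg A (k + k + 1) (-1 + ℓ * r) := hlift.mono (by omega)
  have h₂ : memQMdeg A (k + k + 1) ((1 - ℓ * r) ^ 2) := by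
    refine memQMdeg.sq ((totalDegree_sub _ _).trans (max_le (by simp) ?_))
    have := totalDegree_mul ℓ r
    omega
  convert ((h₁.add h₁).add h₂).add (hsq.sq_mul hr) using 1
  ring

end Elimination

lemma memQMdeg_neg_one_of_negative {n m : ℕ} {A : Fin (n+1) → Matrix (Fin m) (Fin m) ℝ} {k : ℕ}
    {c : ℝ} (hc : c < 0) (h : memQMdeg A k (C c)) : memQMdeg A k (-1) := by
  convert h.smul (c := -c⁻¹) (by simpa using hc.le) using 1
  rw [smul_eq_C_mul, ← C_mul, neg_mul, inv_mul_cancel₀ hc.ne, C_neg, C_1]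

/-- **Theorem (exponential degree bound in the number of variables).** If `L` is an
infeasible linear pencil in `n` variables, then `-1 ∈ M_L^(2ⁿ - 1)`. -/
theorem neg_one_mem_truncatedQM_two_pow_vars
    (n m : ℕ) (A : Fin (n+1) → Matrix (Fin m) (Fin m) ℝ)
    (hsymm : ∀ i, (A i).IsSymm)
    (hinf : specSet A = ∅) :
    memQMdeg A (2^n - 1) (-1) := by
  induction n with
  | zero =>
    have h : (0 : Fin 0 → ℝ) ∉ specSet A := hinf ▸ Set.notMem_empty _
    rw [mem_specSet_iff hsymm, not_forall] at h
    obtain ⟨u, hu⟩ := h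
    rw [dotProduct_pencilEval, Finset.univ_eq_empty, Finset.sum_empty, add_zero, not_le] at hu
    refine memQMdeg_neg_one_of_negative hu ?_
    have h : memQMdeg A (2 ^ 0 - 1) (vLv A fun b => C (u b)) := memQMdeg.of_vLv (by simp)
    simpa [vLv_C, affPoly_apply] using h
  | succ n ih =>
    have hpow : 2 ^ (n + 1) - 1 = (2 ^ n - 1) + (2 ^ n - 1) + 1 := by
      have := Nat.one_le_two_pow (n := n)
      omega
    obtain ⟨z, hz, hsq⟩ := exists_memQMdeg_neg_affPoly_sq hsymm hinf
    rw [hpow]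
    by_cases hconst : ∀ j : Fin (n+1), z j.succ = 0
    · have hz0 : z 0 ≠ 0 := fun h0 => hz (funext (Fin.cases h0 hconst))
      refine (memQMdeg_neg_one_of_negative (neg_neg_of_pos (pow_pos (abs_pos.2 hz0) 2)) ?_).mono
        (Nat.le_add_left 1 _)
      simpa [affPoly_apply, hconst] using hsq
    · obtain ⟨j, hj⟩ := not_forall.1 hconst
      obtain ⟨r, hr, hlift⟩ := exists_memQMdeg_rename_add hj
        (ih (restrictPencil A z j) (restrictPencil_isSymm hsymm)
          (specSet_restrictPencil_eq_empty hinf))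
      rw [map_neg, map_one] at hlift
      exact memQMdeg_neg_one_of_lift (totalDegree_affPoly_le z) hr hlift hsq
end

section
/- (Certificates for low-dimensionality of spectrahedra.) For any linear pencil L of size m in n variables, the following are equivalent: (i) the spectrahedron S_L has empty interior in ℝⁿ; (ii) there exist a nonzero polynomial ℓ ∈ ℝ[X₁,…,Xₙ] of degree at most 1 and a quadratic sos-matrix S ∈ ℝ[X₁,…,Xₙ]^(m×m) such that −ℓ² = tr(L·S). -/
open MvPolynomial Matrix

/-- An sos-matrix: a matrix polynomial of the form `Pᵀ P`. -/
def IsSosMatrix {n m : ℕ} (S : Matrix (Fin m) (Fin m) (MvPolynomial (Fin n) ℝ)) : Prop :=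
  ∃ (s : ℕ) (P : Matrix (Fin s) (Fin m) (MvPolynomial (Fin n) ℝ)), S = Pᵀ * P

section Separation

variable {ι : Type*} [Fintype ι]

theorem convex_setOf_dotProduct_mulVec_pos :
    Convex ℝ {M : Matrix ι ι ℝ | ∀ v ≠ 0, 0 < v ⬝ᵥ M *ᵥ v} := by
  intro M hM N hN a b ha hb hab v hv
  have h1 := hM v hv
  have h2 := hN v hv
  simp only [add_mulVec, smul_mulVec, dotProduct_add, dotProduct_smul, smul_eq_mul]
  rcases ha.eq_or_lt with rfl | ha
  · obtain rfl : b = 1 := by linarith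
    simpa using h2
  · positivity

theorem isOpen_setOf_dotProduct_mulVec_pos :
    IsOpen {M : Matrix ι ι ℝ | ∀ v ≠ 0, 0 < v ⬝ᵥ M *ᵥ v} := by
  rw [isOpen_iff_mem_nhds]
  intro M hM
  have hK : ∀ᶠ N in nhds M, ∀ v ∈ Metric.sphere (0 : ι → ℝ) 1, 0 < v ⬝ᵥ N *ᵥ v := by
    refine (isCompact_sphere _ _).eventually_forall_of_forall_eventually fun v hv => ?_
    have hv0 : v ≠ 0 := by rintro rfl; simp at hv
    have hc : Continuous fun z : Matrix ι ι ℝ × (ι → ℝ) => z.2 ⬝ᵥ z.1 *ᵥ z.2 := by fun_prop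
    exact hc.continuousAt.eventually (lt_mem_nhds (hM v hv0))
  filter_upwards [hK] with N hN v hv
  have hpos : 0 < ‖v‖ := norm_pos_iff.mpr hv
  have h := hN (‖v‖⁻¹ • v) (by simp [norm_smul, hpos.ne'])
  simp only [mulVec_smul, dotProduct_smul, smul_dotProduct, smul_eq_mul] at h
  exact pos_of_mul_pos_right (pos_of_mul_pos_right h (by positivity)) (by positivity)

open scoped MatrixOrder in
/-- A convex set of symmetric matrices without positive definite element is separated from the
positive definite cone by a nonzero positive semidefinite matrix, given here as `Bᵀ * B`. -/
theorem exists_separating_rows {T : Set (Matrix ι ι ℝ)} (hconv : Convex ℝ T) (hne : T.Nonempty)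
    (hT : ∀ M ∈ T, M.IsSymm) (hdisj : ∀ M ∈ T, ¬ ∀ v ≠ 0, 0 < v ⬝ᵥ M *ᵥ v) :
    ∃ B : Matrix ι ι ℝ, B ≠ 0 ∧ ∀ M ∈ T, ∑ i, B i ⬝ᵥ M *ᵥ B i ≤ 0 := by
  classical
  obtain ⟨f, u, hf, hu⟩ := geometric_hahn_banach_open convex_setOf_dotProduct_mulVec_pos
    isOpen_setOf_dotProduct_mulVec_pos hconv (Set.disjoint_right.mpr hdisj)
  have hlin (N : Matrix ι ι ℝ) {M : Matrix ι ι ℝ} (hM : ∀ v ≠ 0, 0 < v ⬝ᵥ M *ᵥ v)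
      (hN : ∀ v, 0 ≤ v ⬝ᵥ N *ᵥ v) (t : ℝ) (ht : 0 ≤ t) (s : ℝ) (hs : 0 < s) :
      t * f N + s * f M < u := by
    have h := hf (t • N + s • M) fun v hv => by
      have h1 := hM v hv
      have h2 := hN v
      simp only [add_mulVec, smul_mulVec, dotProduct_add, dotProduct_smul, smul_eq_mul]
      positivity
    simpa using h
  have hone : ∀ v : ι → ℝ, v ≠ 0 → 0 < v ⬝ᵥ (1 : Matrix ι ι ℝ) *ᵥ v := fun v hv => by
    have := dotProduct_star_self_pos_iff.mpr hv
    simpa using this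
  have hu0 : 0 ≤ u := by
    by_contra! hlt
    have h := hlin 0 hone (by simp) 0 le_rfl (-u / (2 * (|f 1| + 1)))
      (div_pos (by linarith) (by positivity))
    have h2 : -u / (2 * (|f 1| + 1)) * |f 1| ≤ -u / 2 := by
      rw [div_mul_eq_mul_div, div_le_div_iff₀ (by positivity) (by norm_num)]
      nlinarith [abs_nonneg (f 1)]
    have h3 := mul_le_mul_of_nonneg_left (neg_abs_le (f 1))
      (div_pos (neg_pos.mpr hlt) (by positivity : 0 < 2 * (|f 1| + 1))).le
    simp only [map_zero, mul_zero, zero_add] at h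
    linarith
  have hnonpos (N : Matrix ι ι ℝ) (hN : ∀ v, 0 ≤ v ⬝ᵥ N *ᵥ v) : f N ≤ 0 := by
    by_contra! hlt
    have h := hlin N hone hN ((u + |f 1|) / f N) (by positivity) 1 one_pos
    rw [div_mul_cancel₀ _ hlt.ne'] at h
    linarith [neg_abs_le (f 1)]
  have hexp (M : Matrix ι ι ℝ) : f M = ∑ a, ∑ b, M a b * f (Matrix.single a b 1) := by
    conv_lhs => rw [Matrix.matrix_eq_sum_single M]
    simp only [map_sum]
    refine Finset.sum_congr rfl fun a _ => Finset.sum_congr rfl fun b _ => ?_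
    rw [← smul_eq_mul, ← map_smul, smul_single, smul_eq_mul, mul_one]
  let S : Matrix ι ι ℝ := fun a b =>
    -(f (Matrix.single a b 1) + f (Matrix.single b a 1)) / 2
  have hS (M : Matrix ι ι ℝ) (hM : M.IsSymm) : ∑ a, ∑ b, M a b * S a b = - f M := by
    have h2 : f M = ∑ a, ∑ b, M a b * f (Matrix.single b a 1) := by
      rw [hexp, Finset.sum_comm]
      simp only [hM.apply]
    have h3 : - f M = -(f M + f M) / 2 := by ring
    rw [h3]
    nth_rw 1 [hexp]
    rw [h2]
    simp only [← Finset.sum_add_distrib, ← Finset.sum_neg_distrib, Finset.sum_div, S]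
    refine Finset.sum_congr rfl fun a _ => Finset.sum_congr rfl fun b _ => ?_
    ring
  have hpsd : S.PosSemidef := by
    refine .of_dotProduct_mulVec_nonneg ?_ fun v => ?_
    · ext a b
      rw [conjTranspose_apply, star_trivial]
      simp only [S, add_comm]
    · have h := hS (vecMulVec v v) (by ext a b; simp [vecMulVec_apply, mul_comm])
      have h2 : f (vecMulVec v v) ≤ 0 := hnonpos _ fun w => by
        rw [vecMulVec_mulVec, dotProduct_smul, dotProduct_comm w v]
        exact mul_self_nonneg _
      rw [star_trivial]
      calc 0 ≤ - f (vecMulVec v v) := by linarith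
        _ = _ := by
          rw [← h]
          simp only [dotProduct, mulVec, Finset.mul_sum, vecMulVec_apply]
          refine Finset.sum_congr rfl fun a _ => Finset.sum_congr rfl fun b _ => ?_
          ring
  obtain ⟨B, hB⟩ := CStarAlgebra.nonneg_iff_eq_star_mul_self.mp hpsd.nonneg
  have hBM (M : Matrix ι ι ℝ) (hM : M.IsSymm) : ∑ i, B i ⬝ᵥ M *ᵥ B i = - f M := by
    rw [← hS M hM, hB, star_eq_conjTranspose]
    simp only [dotProduct, mulVec, Finset.mul_sum, mul_apply, conjTranspose_apply, star_trivial]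
    rw [Finset.sum_comm]
    refine Finset.sum_congr rfl fun a _ => ?_
    rw [Finset.sum_comm]
    refine Finset.sum_congr rfl fun b _ => Finset.sum_congr rfl fun i _ => ?_
    ring
  refine ⟨B, ?_, fun M hM => ?_⟩
  · rintro rfl
    obtain ⟨M, hM⟩ := hne
    have h1 := hBM 1 isSymm_one
    have h2 := hBM M (hT M hM)
    have h3 := hf 1 hone
    have h4 := hu M hM
    have hz (i : ι) : (0 : Matrix ι ι ℝ) i = 0 := rfl
    simp only [hz, zero_dotProduct, Finset.sum_const_zero] at h1 h2
    linarith
  · rw [hBM M (hT M hM)]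
    linarith [hu M hM]

/-- The matrix of the orthogonal projection onto the common kernel of a family of matrices. -/
theorem exists_commonKernel_projection {κ : Type*} (A : κ → Matrix ι ι ℝ) :
    ∃ Q : Matrix ι ι ℝ, Q.IsSymm ∧ Q * Q = Q ∧ (∀ k, A k * Q = 0) ∧
      ∀ v, (∀ k, A k *ᵥ v = 0) → Q *ᵥ v = v := by
  classical
  let K : Submodule ℝ (EuclideanSpace ℝ ι) :=
    { carrier := {v | ∀ k, A k *ᵥ v.ofLp = 0}
      add_mem' := fun {v w} hv hw k => by simp [mulVec_add, hv k, hw k]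
      zero_mem' := fun k => by simp
      smul_mem' := fun c v hv k => by simp [mulVec_smul, hv k] }
  let φ := Matrix.toEuclideanCLM (𝕜 := ℝ) (n := ι)
  have hQ : φ (φ.symm K.starProjection) = K.starProjection := φ.apply_symm_apply _
  have happ (v : ι → ℝ) :
      φ.symm K.starProjection *ᵥ v = (K.starProjection (WithLp.toLp 2 v)).ofLp := by
    conv_rhs => rw [← hQ]
    rfl
  have hproj : IsStarProjection K.starProjection := isStarProjection_starProjection
  refine ⟨φ.symm K.starProjection, ?_, ?_, fun k => ?_, fun v hv => ?_⟩
  · have h : star (φ.symm K.starProjection) = φ.symm K.starProjection := by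
      exact (φ.symm.map_star' _).symm.trans (congrArg φ.symm hproj.isSelfAdjoint.star_eq)
    rwa [star_eq_conjTranspose, conjTranspose_eq_transpose_of_trivial] at h
  · rw [← map_mul, hproj.isIdempotentElem.eq]
  · refine Matrix.ext_of_mulVec_single fun i => ?_
    rw [← mulVec_mulVec, happ, zero_mulVec]
    exact K.starProjection_apply_mem _ k
  · rw [happ, Submodule.starProjection_eq_self_iff.mpr (show WithLp.toLp 2 v ∈ K from hv)]

end Separation

section Certificate

variable {n m : ℕ} {A : Fin (n + 1) → Matrix (Fin m) (Fin m) ℝ}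

/-- The affine polynomial `uᵀ L v` for constant vectors `u` and `v`. -/
noncomputable def pencilForm (A : Fin (n + 1) → Matrix (Fin m) (Fin m) ℝ) (u v : Fin m → ℝ) :
    MvPolynomial (Fin n) ℝ :=
  C (u ⬝ᵥ A 0 *ᵥ v) + ∑ i : Fin n, X i * C (u ⬝ᵥ A i.succ *ᵥ v)

theorem sum_sum_C_mul_pencilPoly_mul_C (u v : Fin m → ℝ) :
    ∑ a, ∑ b, C (u a) * pencilPoly A a b * C (v b) = pencilForm A u v := by
  have hC (k) : C (σ := Fin n) (u ⬝ᵥ A k *ᵥ v) =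
      ∑ a, ∑ b, C (u a) * C (A k a b) * C (v b) := by
    simp only [dotProduct, mulVec, map_sum, map_mul, Finset.mul_sum, mul_assoc]
  simp only [pencilForm, pencilPoly, hC, Finset.mul_sum, mul_add, add_mul, Finset.sum_mul,
    Finset.sum_add_distrib]
  congr 1
  conv_rhs => rw [Finset.sum_comm]
  refine Finset.sum_congr rfl fun a _ => ?_
  conv_rhs => rw [Finset.sum_comm]
  refine Finset.sum_congr rfl fun b _ => Finset.sum_congr rfl fun i _ => ?_
  ring

theorem totalDegree_pencilForm_le (u v : Fin m → ℝ) : (pencilForm A u v).totalDegree ≤ 1 := by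
  refine (totalDegree_add _ _).trans (max_le (by simp) (totalDegree_finsetSum_le fun i _ => ?_))
  exact (totalDegree_mul _ _).trans (by simp)

theorem pencilForm_comm (hsymm : ∀ i, (A i).IsSymm) (u v : Fin m → ℝ) :
    pencilForm A u v = pencilForm A v u := by
  have h (i) : u ⬝ᵥ A i *ᵥ v = v ⬝ᵥ A i *ᵥ u := by
    rw [dotProduct_mulVec, ← mulVec_transpose, (hsymm i).eq, dotProduct_comm]
  simp only [pencilForm, h]

theorem vLv_mul_C_add_mul_C (hsymm : ∀ i, (A i).IsSymm) (u v : Fin m → ℝ)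
    (p q : MvPolynomial (Fin n) ℝ) :
    vLv A (fun a => p * C (u a) + q * C (v a)) =
      p ^ 2 * pencilForm A u u + 2 * p * q * pencilForm A u v + q ^ 2 * pencilForm A v v := by
  have h : vLv A (fun a => p * C (u a) + q * C (v a)) =
      p ^ 2 * pencilForm A u u + p * q * pencilForm A u v + p * q * pencilForm A v u
        + q ^ 2 * pencilForm A v v := by
    simp only [vLv, ← sum_sum_C_mul_pencilPoly_mul_C, Finset.mul_sum, ← Finset.sum_add_distrib]
    refine Finset.sum_congr rfl fun a _ => Finset.sum_congr rfl fun b _ => ?_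
    ring
  rw [h, pencilForm_comm hsymm v u]
  ring

theorem vLv_mul_C (u : Fin m → ℝ) (p : MvPolynomial (Fin n) ℝ) :
    vLv A (fun a => p * C (u a)) = p ^ 2 * pencilForm A u u := by
  simp only [vLv, ← sum_sum_C_mul_pencilPoly_mul_C, Finset.mul_sum]
  refine Finset.sum_congr rfl fun a _ => Finset.sum_congr rfl fun b _ => ?_
  ring

theorem eval_pencilPoly (x : Fin n → ℝ) (a b : Fin m) :
    eval x (pencilPoly A a b) = pencilEval A x a b := by
  simp [pencilPoly, pencilEval, Matrix.sum_apply]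

theorem eval_vLv (x : Fin n → ℝ) (w : Fin m → MvPolynomial (Fin n) ℝ) :
    eval x (vLv A w) =
      (fun a => eval x (w a)) ⬝ᵥ pencilEval A x *ᵥ (fun a => eval x (w a)) := by
  simp [vLv, eval_pencilPoly, dotProduct, mulVec, Finset.mul_sum, mul_assoc]

theorem trace_pencilPoly_mul_transpose_mul {s : ℕ}
    (P : Matrix (Fin s) (Fin m) (MvPolynomial (Fin n) ℝ)) :
    (pencilPoly A * (Pᵀ * P)).trace = ∑ j, vLv A (P j) := by
  simp only [Matrix.trace, diag_apply, mul_apply, transpose_apply, vLv, Finset.mul_sum]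
  conv_rhs => rw [Finset.sum_comm]
  refine Finset.sum_congr rfl fun a _ => ?_
  conv_rhs => rw [Finset.sum_comm]
  refine Finset.sum_congr rfl fun b _ => Finset.sum_congr rfl fun j _ => ?_
  ring

/-- A quadratic sos-matrix is assembled from vectors of affine polynomials. -/
theorem exists_certificate_of_rows {s : ℕ} (P : Fin s → Fin m → MvPolynomial (Fin n) ℝ)
    (hP : ∀ j a, (P j a).totalDegree ≤ 1) {ℓ : MvPolynomial (Fin n) ℝ} (hℓ0 : ℓ ≠ 0)
    (hℓ : ℓ.totalDegree ≤ 1) (h : -ℓ ^ 2 = ∑ j, vLv A (P j)) :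
    ∃ ℓ : MvPolynomial (Fin n) ℝ, ℓ ≠ 0 ∧ ℓ.totalDegree ≤ 1 ∧
      ∃ S : Matrix (Fin m) (Fin m) (MvPolynomial (Fin n) ℝ),
        IsSosMatrix S ∧ (∀ a b, (S a b).totalDegree ≤ 2) ∧
        -ℓ ^ 2 = (pencilPoly A * S).trace := by
  refine ⟨ℓ, hℓ0, hℓ, (Matrix.of P)ᵀ * Matrix.of P, ⟨s, Matrix.of P, rfl⟩, fun a b => ?_, ?_⟩
  · rw [mul_apply]
    refine totalDegree_finsetSum_le fun j _ => (totalDegree_mul _ _).trans ?_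
    have h1 := hP j a
    have h2 := hP j b
    simp only [transpose_apply, of_apply]
    omega
  · rw [trace_pencilPoly_mul_transpose_mul, h]
    rfl

theorem totalDegree_C_mul_add_C_le {ℓ : MvPolynomial (Fin n) ℝ} (hℓ : ℓ.totalDegree ≤ 1)
    (c d : ℝ) : (C c * ℓ + C d).totalDegree ≤ 1 :=
  (totalDegree_add _ _).trans (max_le ((totalDegree_mul _ _).trans (by simpa using hℓ)) (by simp))

theorem totalDegree_mul_C_le {ℓ : MvPolynomial (Fin n) ℝ} (hℓ : ℓ.totalDegree ≤ 1) (c : ℝ) :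
    (ℓ * C c).totalDegree ≤ 1 :=
  (totalDegree_mul _ _).trans (by simpa using hℓ)

theorem C_half_add_C_half : (C (1 / 2) + C (1 / 2) : MvPolynomial (Fin n) ℝ) = 1 := by
  rw [← C_add]
  norm_num

/-- An isotropic vector `v` of the pencil that is not in its kernel yields a certificate: with
`ℓ = vᵀ L w` and `q = wᵀ L w`, the vector `ℓ w - (q + 1) / 2 v` evaluates to `-ℓ²`. -/
theorem exists_certificate_of_isotropic (hsymm : ∀ i, (A i).IsSymm) {v w : Fin m → ℝ}
    (hv : pencilForm A v v = 0) (hvw : pencilForm A v w ≠ 0) :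
    ∃ ℓ : MvPolynomial (Fin n) ℝ, ℓ ≠ 0 ∧ ℓ.totalDegree ≤ 1 ∧
      ∃ S : Matrix (Fin m) (Fin m) (MvPolynomial (Fin n) ℝ),
        IsSosMatrix S ∧ (∀ a b, (S a b).totalDegree ≤ 2) ∧
        -ℓ ^ 2 = (pencilPoly A * S).trace := by
  refine exists_certificate_of_rows (s := 1)
    (fun _ a => (C (-(1 / 2)) * pencilForm A w w + C (-(1 / 2))) * C (v a)
      + pencilForm A v w * C (w a)) (fun _ a => ?_) hvw (totalDegree_pencilForm_le _ _) ?_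
  · exact (totalDegree_add _ _).trans (max_le
      (totalDegree_mul_C_le (totalDegree_C_mul_add_C_le (totalDegree_pencilForm_le _ _) _ _) _)
      (totalDegree_mul_C_le (totalDegree_pencilForm_le _ _) _))
  · rw [Fin.sum_univ_one, vLv_mul_C_add_mul_C hsymm, hv, C_neg]
    linear_combination (pencilForm A v w ^ 2 * (pencilForm A w w + 1)) *
      C_half_add_C_half (n := n)

/-- Vectors whose values `uᵢᵀ L uᵢ` sum up to zero, not all of them being zero, yield a
certificate. -/
theorem exists_certificate_of_sum_eq_zero {s : ℕ} (u : Fin s → Fin m → ℝ)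
    (hsum : ∑ i, pencilForm A (u i) (u i) = 0) {j : Fin s} (hj : pencilForm A (u j) (u j) ≠ 0) :
    ∃ ℓ : MvPolynomial (Fin n) ℝ, ℓ ≠ 0 ∧ ℓ.totalDegree ≤ 1 ∧
      ∃ S : Matrix (Fin m) (Fin m) (MvPolynomial (Fin n) ℝ),
        IsSosMatrix S ∧ (∀ a b, (S a b).totalDegree ≤ 2) ∧
        -ℓ ^ 2 = (pencilPoly A * S).trace := by
  set ℓ := pencilForm A (u j) (u j) with hℓ
  have hdeg : ℓ.totalDegree ≤ 1 := totalDegree_pencilForm_le _ _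
  refine exists_certificate_of_rows
    (fun i a => (C (1 / 2) * ℓ + C (if i = j then -(1 / 2) else 1 / 2)) * C (u i a))
    (fun i a => totalDegree_mul_C_le (totalDegree_C_mul_add_C_le hdeg _ _) _) hj hdeg ?_
  simp only [vLv_mul_C]
  rw [← Finset.add_sum_erase _ _ (Finset.mem_univ j)] at hsum ⊢
  have hrest : ∑ i ∈ Finset.univ.erase j,
      (C (1 / 2) * ℓ + C (if i = j then -(1 / 2) else 1 / 2)) ^ 2 * pencilForm A (u i) (u i)
      = (C (1 / 2) * ℓ + C (1 / 2)) ^ 2 *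
        ∑ i ∈ Finset.univ.erase j, pencilForm A (u i) (u i) := by
    rw [Finset.mul_sum]
    refine Finset.sum_congr rfl fun i hi => ?_
    rw [if_neg (Finset.ne_of_mem_erase hi)]
  rw [hrest, eq_neg_of_add_eq_zero_right hsum, if_pos rfl, ← hℓ, C_neg]
  linear_combination (ℓ ^ 2 * (1 + (C (1 / 2) + C (1 / 2)))) * C_half_add_C_half (n := n)

theorem eval_pencilForm (x : Fin n → ℝ) (u v : Fin m → ℝ) :
    eval x (pencilForm A u v) =
      u ⬝ᵥ A 0 *ᵥ v + ∑ i : Fin n, x i * (u ⬝ᵥ A i.succ *ᵥ v) := by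
  simp [pencilForm]

theorem dotProduct_pencilEval_mulVec (x : Fin n → ℝ) (u v : Fin m → ℝ) :
    u ⬝ᵥ pencilEval A x *ᵥ v = u ⬝ᵥ A 0 *ᵥ v + ∑ i : Fin n, x i * (u ⬝ᵥ A i.succ *ᵥ v) := by
  simp [pencilEval, add_mulVec, Matrix.sum_mulVec, smul_mulVec, dotProduct_add, dotProduct_sum]

/-- A vector whose pairings under the pencil all vanish is in the common kernel. -/
theorem mulVec_eq_zero_of_pencilForm_eq_zero (hsymm : ∀ i, (A i).IsSymm) {u : Fin m → ℝ}
    (hu : ∀ w, pencilForm A u w = 0) (k : Fin (n + 1)) : A k *ᵥ u = 0 := by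
  have hform (w : Fin m → ℝ) : w ⬝ᵥ A k *ᵥ u = 0 := by
    have hw : pencilForm A w u = 0 := by rw [pencilForm_comm hsymm, hu w]
    have h0 : w ⬝ᵥ A 0 *ᵥ u = 0 := by
      have h := congrArg (eval (0 : Fin n → ℝ)) hw
      rw [eval_pencilForm] at h
      simpa using h
    refine Fin.cases h0 (fun i => ?_) k
    simpa [eval_pencilForm, h0, Pi.single_apply] using
      congrArg (eval (Pi.single i 1 : Fin n → ℝ)) hw
  simpa using dotProduct_eq_zero _ fun w => by rw [dotProduct_comm]; exact hform w

theorem isSymm_pencilEval (hsymm : ∀ i, (A i).IsSymm) (x : Fin n → ℝ) :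
    (pencilEval A x).IsSymm := by
  simp [pencilEval, IsSymm, transpose_add, transpose_sum, (hsymm _).eq]

/-- An affine function that is bounded above is constant. -/
theorem eq_zero_of_forall_add_sum_le {c₀ : ℝ} {c : Fin n → ℝ}
    (h : ∀ x : Fin n → ℝ, c₀ + ∑ i, x i * c i ≤ 0) (i : Fin n) : c i = 0 := by
  by_contra hc
  have h1 := h (Pi.single i ((1 - c₀) / c i))
  simp [Pi.single_apply, div_mul_cancel₀ _ hc] at h1
  linarith

theorem interior_specSet_eq_empty_of_certificate {ℓ : MvPolynomial (Fin n) ℝ} (hℓ : ℓ ≠ 0)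
    {S : Matrix (Fin m) (Fin m) (MvPolynomial (Fin n) ℝ)} (hS : IsSosMatrix S)
    (h : -ℓ ^ 2 = (pencilPoly A * S).trace) : interior (specSet A) = ∅ := by
  obtain ⟨s, P, rfl⟩ := hS
  rw [trace_pencilPoly_mul_transpose_mul] at h
  by_contra hne
  obtain ⟨x, hx⟩ := Set.nonempty_iff_ne_empty.mpr hne
  obtain ⟨ε, hε, hball⟩ := Metric.isOpen_iff.mp isOpen_interior x hx
  refine hℓ (MvPolynomial.funext_set (fun i => Metric.ball (x i) ε) (fun i => ?_) fun y hy => ?_)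
  · rw [Real.ball_eq_Ioo]
    exact Set.Ioo_infinite (by linarith)
  · rw [← ball_pi x hε] at hy
    have hmem : y ∈ specSet A := interior_subset (hball hy)
    have hpsd : (pencilEval A y).PosSemidef := hmem
    have hy := congrArg (eval y) h
    simp only [map_neg, map_pow, map_sum, eval_vLv] at hy
    have hnonneg : 0 ≤ ∑ j, (fun a => eval y (P j a)) ⬝ᵥ
        pencilEval A y *ᵥ (fun a => eval y (P j a)) :=
      Finset.sum_nonneg fun j _ => hpsd.dotProduct_mulVec_nonneg _
    rw [map_zero]
    exact pow_eq_zero_iff two_ne_zero |>.mp (le_antisymm (by linarith) (sq_nonneg _))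

theorem interior_specSet_nonempty (hsymm : ∀ i, (A i).IsSymm) {Q : Matrix (Fin m) (Fin m) ℝ}
    (hQs : Q.IsSymm) (hQ : Q * Q = Q) (hAQ : ∀ k, A k * Q = 0) {x : Fin n → ℝ}
    (hx : ∀ v ≠ 0, 0 < v ⬝ᵥ (pencilEval A x + Q) *ᵥ v) : (interior (specSet A)).Nonempty := by
  refine ⟨x, mem_interior_iff_mem_nhds.mpr ?_⟩
  have hc : Continuous fun y : Fin n → ℝ => pencilEval A y + Q := by
    unfold pencilEval
    fun_prop
  filter_upwards [hc.continuousAt.preimage_mem_nhds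
    (isOpen_setOf_dotProduct_mulVec_pos.mem_nhds hx)] with y hy
  refine .of_dotProduct_mulVec_nonneg
    (by rw [IsHermitian, conjTranspose_eq_transpose_of_trivial]; exact isSymm_pencilEval hsymm y)
    fun v => ?_
  have hLQ : pencilEval A y * Q = 0 := by
    simp [pencilEval, add_mul, Finset.sum_mul, hAQ]
  have hQL : Q * pencilEval A y = 0 := by
    rw [← transpose_eq_zero, transpose_mul, hQs.eq, (isSymm_pencilEval hsymm y).eq, hLQ]
  have hnonneg : 0 ≤ (v - Q *ᵥ v) ⬝ᵥ (pencilEval A y + Q) *ᵥ (v - Q *ᵥ v) := by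
    by_cases h0 : v - Q *ᵥ v = 0
    · simp [h0]
    · exact (hy _ h0).le
  have hval : (pencilEval A y + Q) *ᵥ (v - Q *ᵥ v) = pencilEval A y *ᵥ v := by
    rw [mulVec_sub, mulVec_mulVec, add_mul, hLQ, hQ, zero_add, add_mulVec, add_sub_cancel_right]
  rw [hval, sub_dotProduct, ← vecMul_transpose Q, hQs.eq, ← dotProduct_mulVec, mulVec_mulVec,
    hQL] at hnonneg
  simpa using hnonneg

theorem exists_certificate_of_interior_eq_empty (hsymm : ∀ i, (A i).IsSymm)
    (hint : interior (specSet A) = ∅) :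
    ∃ ℓ : MvPolynomial (Fin n) ℝ, ℓ ≠ 0 ∧ ℓ.totalDegree ≤ 1 ∧
      ∃ S : Matrix (Fin m) (Fin m) (MvPolynomial (Fin n) ℝ),
        IsSosMatrix S ∧ (∀ a b, (S a b).totalDegree ≤ 2) ∧
        -ℓ ^ 2 = (pencilPoly A * S).trace := by
  obtain ⟨Q, hQs, hQ, hAQ, hker⟩ := exists_commonKernel_projection A
  obtain ⟨B, hB0, hB⟩ := exists_separating_rows (T := Set.range fun x => pencilEval A x + Q)
    (by
      rintro _ ⟨x, rfl⟩ _ ⟨y, rfl⟩ a b - - hab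
      refine ⟨a • x + b • y, ?_⟩
      obtain rfl : b = 1 - a := by linarith
      simp only [pencilEval, Pi.add_apply, Pi.smul_apply, smul_eq_mul, add_smul, mul_smul,
        Finset.sum_add_distrib, ← Finset.smul_sum]
      module)
    (Set.range_nonempty _)
    (by
      rintro _ ⟨x, rfl⟩
      exact (isSymm_pencilEval hsymm x).add hQs)
    (by
      rintro _ ⟨x, rfl⟩ hx
      exact (interior_specSet_nonempty hsymm hQs hQ hAQ hx).ne_empty hint)
  set q : ℝ := ∑ i, B i ⬝ᵥ Q *ᵥ B i
  set c : Fin (n + 1) → ℝ := fun k => ∑ i, B i ⬝ᵥ A k *ᵥ B i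
  have hQsq (i) : B i ⬝ᵥ Q *ᵥ B i = (Q *ᵥ B i) ⬝ᵥ (Q *ᵥ B i) := by
    conv_lhs => rw [← hQ, ← mulVec_mulVec, dotProduct_mulVec, ← mulVec_transpose, hQs.eq]
  have hQnonneg (i) : 0 ≤ B i ⬝ᵥ Q *ᵥ B i := by
    rw [hQsq]
    exact Finset.sum_nonneg fun a _ => mul_self_nonneg _
  have hq0 : 0 ≤ q := Finset.sum_nonneg fun i _ => hQnonneg i
  have haff (x : Fin n → ℝ) : (c 0 + q) + ∑ k : Fin n, x k * c k.succ ≤ 0 := by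
    have h := hB _ ⟨x, rfl⟩
    simp only [add_mulVec, dotProduct_add, dotProduct_pencilEval_mulVec,
      Finset.sum_add_distrib] at h
    rw [Finset.sum_comm] at h
    simp only [← Finset.mul_sum] at h
    linarith
  have hcsucc := eq_zero_of_forall_add_sum_le haff
  have hc0 : c 0 + q ≤ 0 := by simpa using haff 0
  have hsum : ∑ i, pencilForm A (B i) (B i) = C (c 0) := by
    simp only [pencilForm, Finset.sum_add_distrib]
    rw [Finset.sum_comm]
    simp only [← Finset.mul_sum, ← map_sum]
    rw [add_eq_left]
    refine Finset.sum_eq_zero fun k _ => ?_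
    rw [show ∑ i, B i ⬝ᵥ A k.succ *ᵥ B i = 0 from hcsucc k, C_0, mul_zero]
  rcases (show c 0 ≤ 0 by linarith).lt_or_eq with hneg | hzero
  · refine exists_certificate_of_rows (fun i a => 1 * C (B i a))
      (fun i a => totalDegree_mul_C_le (by simp) _) (ℓ := C (√(-c 0))) ?_ (by simp) ?_
    · rw [Ne, C_eq_zero]
      exact (Real.sqrt_pos.mpr (by linarith)).ne'
    · simp only [vLv_mul_C]
      rw [one_pow]
      simp only [one_mul]
      rw [hsum, ← C_pow, Real.sq_sqrt (by linarith), C_neg, neg_neg]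
  · rw [hzero, C_0] at hsum
    by_cases hall : ∀ i, pencilForm A (B i) (B i) = 0
    · obtain ⟨i, hi⟩ : ∃ i, B i ≠ 0 := by
        by_contra! h
        exact hB0 (funext h)
      have hQi : Q *ᵥ B i = 0 := by
        have h := (Finset.sum_eq_zero_iff_of_nonneg fun i _ => hQnonneg i).mp
          (show q = 0 by linarith) i (Finset.mem_univ i)
        exact dotProduct_self_eq_zero.mp (hQsq i ▸ h)
      obtain ⟨w, hw⟩ : ∃ w, pencilForm A (B i) w ≠ 0 := by
        by_contra! h
        exact hi ((hker _ (mulVec_eq_zero_of_pencilForm_eq_zero hsymm h)).symm.trans hQi)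
      exact exists_certificate_of_isotropic hsymm (hall i) hw
    · push Not at hall
      obtain ⟨j, hj⟩ := hall
      exact exists_certificate_of_sum_eq_zero B hsum hj

end Certificate

/-- **Certificates for low-dimensionality of spectrahedra.** For a linear pencil `L`,
the spectrahedron `S_L` has empty interior if and only if there exist a nonzero linear
polynomial `ℓ` and a quadratic sos-matrix `S` with `-ℓ² = tr(L S)`. -/
theorem interior_empty_iff_exists_lowdim_certificate
    (n m : ℕ) (A : Fin (n+1) → Matrix (Fin m) (Fin m) ℝ)
    (hsymm : ∀ i, (A i).IsSymm) :
    interior (specSet A) = ∅ ↔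
      ∃ ℓ : MvPolynomial (Fin n) ℝ, ℓ ≠ 0 ∧ ℓ.totalDegree ≤ 1 ∧
        ∃ S : Matrix (Fin m) (Fin m) (MvPolynomial (Fin n) ℝ),
          IsSosMatrix S ∧ (∀ a b, (S a b).totalDegree ≤ 2) ∧
          -ℓ^2 = (pencilPoly A * S).trace := by
  exact ⟨exists_certificate_of_interior_eq_empty hsymm,
    fun ⟨_, hℓ, _, _, hS, _, h⟩ => interior_specSet_eq_empty_of_certificate hℓ hS h⟩
end
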